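/- Formal homotopy of morphisms of interaction spaces is not transitive: there exist interaction spaces (X,{X_1,X_2}) with X_1, X_2 disjoint single points, (Y,{Y_1,Y_2}) with Y_1=Y_2 the unit disk, and morphisms f, g, h such that f is formally homotopic to h and h is formally homotopic to g, but f is not formally homotopic to g. -/

import Mathlib

open scoped unitInterval

universe u

/-- An `n`-interaction space: a topological space `X` together with a covering
by `n` subspaces. -/
structure InterSp (n : ℕ) : Type (u + 1) where
  X : Type u
  [top : TopologicalSpace X]
  C : Fin n → Set X
  covers : (⋃ i, C i) = Set.univ

attribute [instance] InterSp.top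

namespace InterSp

variable {n : ℕ}

/-- A morphism of `n`-interaction spaces: a family of continuous maps
`f i : X i → Y i` such that, for `i ≠ j`, `f i u = f j v` iff `u = v`
(as points of the ambient space). -/
structure Mor (A B : InterSp n) where
  f : ∀ i, C(A.C i, B.C i)
  cond : ∀ i j, i ≠ j → ∀ (u : A.C i) (v : A.C j),
    ((f i u : B.X) = ((f j v : B.C j) : B.X)) ↔ ((u : A.X) = ((v : A.C j) : A.X))

/-- A formal homotopy between two morphisms of interaction spaces: a morphism of
interaction spaces `(X × I, {Xᵢ × I}) → (Y, {Yᵢ})` restricting to `f` at `0` and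
`g` at `1`. -/
structure FHtpy {A B : InterSp n} (f g : Mor A B) where
  H : ∀ i, C((A.C i) × I, B.C i)
  cond : ∀ i j, i ≠ j → ∀ (u : A.C i) (v : A.C j) (s t : I),
    ((H i (u, s) : B.X) = ((H j (v, t) : B.C j) : B.X)) ↔ ((u : A.X) = ((v : A.C j) : A.X))
  h0 : ∀ i u, H i (u, 0) = f.f i u
  h1 : ∀ i u, H i (u, 1) = g.f i u

/-- `f` and `g` are formally homotopic. -/
def FHomotopic {A B : InterSp n} (f g : Mor A B) : Prop := Nonempty (FHtpy f g)

/-- `f` and `g` are homotopic: connected by a finite chain of formal homotopies. -/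
def Homotopic {A B : InterSp n} (f g : Mor A B) : Prop :=
  Relation.ReflTransGen FHomotopic f g

end InterSp


namespace Aux

universe v w

abbrev D : Type v := ULift.{v} ↥(Metric.closedBall (0 : ℂ) 1)

def AA : InterSp.{v} 2 where
  X := ULift.{v} (Fin 2)
  top := ⊥
  C := fun i => {⟨i⟩}
  covers := by
    ext ⟨x⟩
    simp

noncomputable def BB : InterSp.{v} 2 where
  X := D.{v}
  C := fun _ => Set.univ
  covers := Set.iUnion_const _

theorem ne_pt {i j : Fin 2} (hij : i ≠ j) (u : AA.{v}.C i) (v : AA.{v}.C j) :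
    (u : AA.{v}.X) ≠ (v : AA.{v}.X) := by
  obtain ⟨u, hu⟩ := u
  obtain ⟨v, hv⟩ := v
  have hu' : u = ULift.up i := hu
  have hv' : v = ULift.up j := hv
  subst hu' hv'
  intro h
  exact hij (ULift.up_injective h)

noncomputable def mkMor (p : Fin 2 → D.{w}) (hp : ∀ i j, i ≠ j → p i ≠ p j) :
    InterSp.Mor AA.{v} BB.{w} where
  f := fun i => ContinuousMap.const _ (⟨p i, Set.mem_univ _⟩ : ↥(Set.univ : Set D.{w}))
  cond := fun i j hij u v => iff_of_false (hp i j hij) (ne_pt hij u v)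

theorem mkHom (p q : Fin 2 → D.{w}) (hp hq) (γ : Fin 2 → C(I, D.{w}))
    (h : ∀ i j, i ≠ j → ∀ s t, γ i s ≠ γ j t)
    (h0 : ∀ i, γ i 0 = p i) (h1 : ∀ i, γ i 1 = q i) :
    InterSp.FHomotopic (mkMor.{v, w} p hp) (mkMor.{v, w} q hq) :=
  ⟨{ H := fun i => ⟨fun x => (⟨γ i x.2, Set.mem_univ _⟩ : ↥(Set.univ : Set D.{w})),
        Continuous.subtype_mk ((γ i).continuous.comp continuous_snd) _⟩
     cond := fun i j hij u v s t => iff_of_false (h i j hij s t) (ne_pt hij u v)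
     h0 := fun i _ => Subtype.ext (h0 i)
     h1 := fun i _ => Subtype.ext (h1 i) }⟩

/-- real point of the disk -/
def pt (x : ℝ) (hx : |x| ≤ 1) : D.{w} := ⟨⟨(x : ℂ), by simpa using hx⟩⟩

theorem pt_inj {x y : ℝ} {hx hy} (h : pt.{w} x hx = pt.{w} y hy) : x = y := by
  have := congrArg (fun z : D.{w} => (z.down : ℂ)) h
  exact Complex.ofReal_injective this

def pathUp : C(I, D.{w}) :=
  ⟨fun t => pt t (abs_le.2 ⟨by linarith [t.2.1], t.2.2⟩), by
    unfold pt
    refine continuous_uliftUp.comp (Continuous.subtype_mk ?_ _)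
    fun_prop⟩

def pathDn : C(I, D.{w}) :=
  ⟨fun t => pt (t - 1) (abs_le.2 ⟨by linarith [t.2.1], by linarith [t.2.2]⟩), by
    unfold pt
    refine continuous_uliftUp.comp (Continuous.subtype_mk ?_ _)
    fun_prop⟩

def a : D.{w} := pt (-1) (by simp)
def b : D.{w} := pt 0 (by simp)
def c : D.{w} := pt 1 (by simp)

theorem ne_of {α : Type*} {p : Fin 2 → α} (h : p 0 ≠ p 1) : ∀ i j, i ≠ j → p i ≠ p j := by
  intro i j hij
  fin_cases i <;> fin_cases j
  · exact absurd rfl hij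
  · exact h
  · exact h.symm
  · exact absurd rfl hij

theorem ne_of_path {γ : Fin 2 → C(I, D.{w})} (h : ∀ s t, γ 0 s ≠ γ 1 t) :
    ∀ i j, i ≠ j → ∀ s t, γ i s ≠ γ j t := by
  intro i j hij s t
  fin_cases i <;> fin_cases j
  · exact absurd rfl hij
  · exact h s t
  · exact (h t s).symm
  · exact absurd rfl hij

theorem ab : a.{w} ≠ b := fun h => by have := pt_inj h; norm_num at this
theorem bc : b.{w} ≠ c := fun h => by have := pt_inj h; norm_num at this
theorem ac : a.{w} ≠ c := fun h => by have := pt_inj h; norm_num at this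

end Aux

/-- formal homotopy is not transitive.  There are interaction
spaces `(X, {X₁, X₂})` with `X₁, X₂` disjoint single points and `(Y, {Y₁, Y₂})`
with `Y₁ = Y₂` the unit disk, and morphisms `f, g, h` with `f` formally
homotopic to `h` and `h` formally homotopic to `g`, while `f` is not formally
homotopic to `g`. -/
theorem stmt2 :
    ∃ (A B : InterSp 2),
      (∃ p q : A.X, p ≠ q ∧ A.C 0 = {p} ∧ A.C 1 = {q}) ∧
      (Nonempty (B.X ≃ₜ ↥(Metric.closedBall (0 : ℂ) 1)) ∧
        B.C 0 = Set.univ ∧ B.C 1 = Set.univ) ∧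
      ∃ f g h : InterSp.Mor A B,
        InterSp.FHomotopic f h ∧ InterSp.FHomotopic h g ∧ ¬ InterSp.FHomotopic f g := by
  refine ⟨Aux.AA, Aux.BB, ⟨⟨0⟩, ⟨1⟩, ?_, rfl, rfl⟩, ⟨⟨Homeomorph.ulift⟩, rfl, rfl⟩,
    Aux.mkMor ![Aux.a, Aux.b] (Aux.ne_of Aux.ab), Aux.mkMor ![Aux.b, Aux.c] (Aux.ne_of Aux.bc),
    Aux.mkMor ![Aux.a, Aux.c] (Aux.ne_of Aux.ac), ?_, ?_, ?_⟩
  · intro h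
    exact absurd (ULift.up_injective h) (by decide)
  · refine Aux.mkHom _ _ _ _ ![ContinuousMap.const _ Aux.a, Aux.pathUp]
      (Aux.ne_of_path ?_) ?_ ?_
    · intro s t h
      have h' : (-1 : ℝ) = t := congrArg (fun z : Aux.D => (z.down : ℂ).re) h
      linarith [t.2.1]
    · intro i
      fin_cases i
      · rfl
      · rfl
    · intro i
      fin_cases i
      · rfl
      · rfl
  · refine Aux.mkHom _ _ _ _ ![Aux.pathDn, ContinuousMap.const _ Aux.c]
      (Aux.ne_of_path ?_) ?_ ?_
    · intro s t h
      have h' : (s : ℝ) - 1 = 1 := congrArg (fun z : Aux.D => (z.down : ℂ).re) h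
      linarith [s.2.2]
    · intro i
      fin_cases i
      · simp [Aux.pathDn, Aux.a]
      · rfl
    · intro i
      fin_cases i
      · simp [Aux.pathDn, Aux.b]
      · rfl
  · rintro ⟨F⟩
    have e := F.cond 0 1 (by decide) ⟨⟨0⟩, rfl⟩ ⟨⟨1⟩, rfl⟩ 1 0
    rw [F.h0, F.h1] at e
    exact absurd (ULift.up_injective (e.1 rfl)) (by decide)
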